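/- A language is context-free if and only if it is recognized by an F₂-automaton, if and only if it is recognized by an SL(2,ℤ)-automaton, if and only if it is recognized by a GL(2,ℤ)-automaton; that is, CF = 𝔏(F₂) = 𝔏(SL(2,ℤ)) = 𝔏(GL(2,ℤ)). -/

import Mathlib

/-- A `G`-automaton over input alphabet `α`: a nondeterministic finite automaton
equipped with a register holding an element of the group `G`. -/
structure GAutomaton (α : Type*) (G : Type*) [Group G] where
  /-- the (finite) state set -/
  Q : Type
  finQ : Finite Q
  /-- the initial state -/
  q0 : Q
  /-- the accepting states -/
  acc : Set Q
  /-- the (finite) transition relation; `none` stands for ε -/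
  δ : Set (Q × Option α × Q × G)
  finδ : δ.Finite

namespace GAutomaton

variable {α : Type*} {G : Type*} [Group G]

/-- One computation step between configurations `(state, register, remaining input)`. -/
def Step (M : GAutomaton α G) (c c' : M.Q × G × List α) : Prop :=
  ∃ σ m, (c.1, σ, c'.1, m) ∈ M.δ ∧ c'.2.1 = c.2.1 * m ∧
    match σ with
    | none => c'.2.2 = c.2.2
    | some s => c.2.2 = s :: c'.2.2

/-- `M.StepsIn k c c'` : configuration `c'` is reachable from `c` in exactly `k` steps. -/
def StepsIn (M : GAutomaton α G) : ℕ → (M.Q × G × List α) → (M.Q × G × List α) → Prop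
  | 0, c, c' => c = c'
  | n + 1, c, c' => ∃ d, M.Step c d ∧ M.StepsIn n d c'

/-- `M` accepts the word `w` within `t` computation steps. -/
def AcceptsIn (M : GAutomaton α G) (w : List α) (t : ℕ) : Prop :=
  ∃ k ≤ t, ∃ q ∈ M.acc, M.StepsIn k (M.q0, 1, w) (q, 1, [])

/-- The language recognized by `M`. -/
def lang (M : GAutomaton α G) : Language α := {w | ∃ t, M.AcceptsIn w t}

/-- `M` is real-time if every transition consumes an input symbol. -/
def RealTime (M : GAutomaton α G) : Prop := ∀ tr ∈ M.δ, tr.2.1 ≠ none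

end GAutomaton

/-- `L ∈ 𝔏(G)` : the language `L` is recognized by some `G`-automaton. -/
def GRecognizable (G : Type*) [Group G] {α : Type*} (L : Language α) : Prop :=
  ∃ M : GAutomaton α G, M.lang = L

/-- `L ∈ 𝔏(G)ʷ_{t(n)}` : `L` is recognized by a weakly `t(n)` time-bounded `G`-automaton. -/
def GRecognizableInTime (G : Type*) [Group G] {α : Type*} (L : Language α) (t : ℕ → ℕ) : Prop :=
  ∃ M : GAutomaton α G, M.lang = L ∧ ∀ w ∈ L, M.AcceptsIn w (t w.length)

/-- `L ∈ 𝔏(G)ʷ_{O(n)}` : `L` is recognized by a weakly linear-time bounded `G`-automaton. -/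
def GRecognizableLinTime (G : Type*) [Group G] {α : Type*} (L : Language α) : Prop :=
  ∃ C : ℕ, GRecognizableInTime G L (fun n => C * n + C)

/-!
A run of an automaton over a free group, once its labels are spelled out letter by letter, returns
the register to the identity exactly when its letters cancel like matched brackets. The words read
by such balanced runs are generated by a grammar whose nonterminals are pairs of states.
Conversely, the stack of a top-down parser is a word over a finite alphabet, and a free group
register over that alphabet replaces it: popping a symbol other than the top one leaves a reduced
word that no longer cancels, which is again the matching of brackets. Free groups of countable rank
embed into `F₂` through the conjugates `bⁿ a b⁻ⁿ`.

A register in `G` can be replaced by one in a subgroup of finite index, since the state can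
remember a coset representative. Sanov's free subgroup of rank two in `SL(2, ℤ)` contains the
principal congruence subgroup of level 4, so it has finite index, and `SL(2, ℤ)` has finite index in
`GL(2, ℤ)`.
-/

section Run

variable {α Λ S G : Type*} [Group G]

/-- Runs of an automaton with transition set `δ`, whose labels act on the register through `ν`:
`Run ν δ p x w q` says that some run from `p` to `q` reads `w` and multiplies the register by `x`.
Neither the states nor the labels need form a finite type, and labels need not be elements of `G`;
automata are thus built in their natural state space and made finite only in
`GRecognizable.of_run`. -/
inductive Run (ν : Λ → G) (δ : Set (S × Option α × S × Λ)) : S → G → List α → S → Prop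
  | nil (p : S) : Run ν δ p 1 [] p
  | cons {p r q : S} {σ : Option α} {m : Λ} {x : G} {w : List α}
      (h : (p, σ, r, m) ∈ δ) (hr : Run ν δ r x w q) : Run ν δ p (ν m * x) (σ.toList ++ w) q

variable {ν : Λ → G} {δ : Set (S × Option α × S × Λ)}

lemma Run.append {p r q : S} {x y : G} {w w' : List α} (h : Run ν δ p x w r)
    (h' : Run ν δ r y w' q) : Run ν δ p (x * y) (w ++ w') q := by
  induction h with
  | nil p => simpa only [one_mul, List.nil_append] using h'
  | cons h _ ih => simpa only [mul_assoc, List.append_assoc] using Run.cons h (ih h')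

lemma Run.map {H : Type*} [Group H] {p q : S} {x : G} {w : List α} (h : Run ν δ p x w q)
    (φ : G →* H) : Run (φ ∘ ν) δ p (φ x) w q := by
  induction h with
  | nil p => exact (map_one φ).symm ▸ .nil p
  | cons h _ ih => simpa using Run.cons h ih

lemma run_comp_iff {H : Type*} [Group H] {φ : G →* H} (hφ : Function.Injective φ) {p q : S}
    {x : G} {w : List α} : Run (φ ∘ ν) δ p (φ x) w q ↔ Run ν δ p x w q := by
  refine ⟨fun h => ?_, fun h => h.map φ⟩
  generalize hy : φ x = y at h
  induction h generalizing x with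
  | nil p => simpa [(map_eq_one_iff φ hφ).mp hy] using Run.nil p
  | @cons p r q σ m y w h _ ih =>
    have hx : x = ν m * ((ν m)⁻¹ * x) := by group
    rw [hx]
    exact .cons h (ih (by simp [hy]))

namespace GAutomaton

variable {M : GAutomaton α G}

lemma StepsIn.run {k : ℕ} {p q : M.Q} {x y : G} {w : List α}
    (h : M.StepsIn k (p, x, w) (q, y, [])) : Run id M.δ p (x⁻¹ * y) w q := by
  induction k generalizing p x w with
  | zero =>
    obtain ⟨rfl, rfl, rfl⟩ : p = q ∧ x = y ∧ w = [] := by simpa [StepsIn] using h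
    simpa using Run.nil p
  | succ k ih =>
    obtain ⟨⟨r, x', w'⟩, ⟨σ, m, hδ, rfl, hw⟩, hk⟩ := h
    obtain rfl : w = σ.toList ++ w' := by cases σ <;> simp_all
    simpa [mul_assoc] using Run.cons hδ (ih hk)

lemma exists_stepsIn_of_run {p q : M.Q} {x : G} {w : List α} (h : Run id M.δ p x w q) (y : G) :
    ∃ k, M.StepsIn k (p, y, w) (q, y * x, []) := by
  induction h generalizing y with
  | nil p => exact ⟨0, by simp [StepsIn]⟩
  | @cons p r q σ m x w h _ ih =>
    obtain ⟨k, hk⟩ := ih (y * m)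
    refine ⟨k + 1, (r, y * m, w), ⟨σ, m, h, rfl, ?_⟩, by simpa [mul_assoc] using hk⟩
    cases σ <;> rfl

lemma mem_lang_iff {w : List α} : w ∈ M.lang ↔ ∃ q ∈ M.acc, Run id M.δ M.q0 1 w q := by
  constructor
  · rintro ⟨_, _, -, q, hq, h⟩
    exact ⟨q, hq, by simpa using StepsIn.run h⟩
  · rintro ⟨q, hq, h⟩
    obtain ⟨k, hk⟩ := exists_stepsIn_of_run h 1
    exact ⟨k, k, le_rfl, q, hq, by simpa using hk⟩

end GAutomaton

lemma run_preimage_iff {S' : Type*} {f : S' → S} {i : S'} {p q : S} (hp : f i = p)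
    (hδ : ∀ t ∈ δ, t.2.2.1 ∈ Set.range f) {x : G} {w : List α} :
    (∃ j, f j = q ∧ Run id {t | ∃ m, (f t.1, t.2.1, f t.2.2.1, m) ∈ δ ∧ ν m = t.2.2.2} i x w j) ↔
      Run ν δ p x w q := by
  constructor
  · rintro ⟨j, rfl, h⟩
    induction h generalizing p with
    | nil i => exact hp ▸ .nil _
    | cons h _ ih =>
      obtain ⟨m, hm, rfl⟩ := h
      exact .cons (hp ▸ hm) (ih rfl)
  · intro h
    induction h generalizing i with
    | nil p => exact ⟨i, hp, .nil i⟩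
    | @cons p r q σ m x w h _ ih =>
      obtain ⟨k, hk : f k = r⟩ := hδ _ h
      obtain ⟨j, hj, hrun⟩ := ih hk
      exact ⟨j, hj, .cons (m := ν m) ⟨m, hp ▸ hk ▸ h, rfl⟩ hrun⟩

theorem GRecognizable.of_run (ν : Λ → G) (hδ : δ.Finite) (q₀ : S) (acc : Set S) {L : Language α}
    (hL : ∀ w, w ∈ L ↔ ∃ q ∈ acc, Run ν δ q₀ 1 w q) : GRecognizable G L := by
  let V : Set S := insert q₀ ((fun t => t.2.2.1) '' δ)
  have : Finite V := (hδ.image _).insert q₀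
  obtain ⟨n, ⟨e⟩⟩ := Finite.exists_equiv_fin V
  let f : Fin n → S := Subtype.val ∘ e.symm
  have hf : Function.Injective f := Subtype.val_injective.comp e.symm.injective
  have hrange : Set.range f = V := by simp [f, Set.range_comp]
  obtain ⟨i, hi⟩ : q₀ ∈ Set.range f := hrange ▸ Set.mem_insert _ _
  have htarget (t) (ht : t ∈ δ) : t.2.2.1 ∈ Set.range f :=
    hrange ▸ Set.mem_insert_of_mem _ ⟨t, ht, rfl⟩
  have hinj : Function.Injective
      (Prod.map f (Prod.map id (Prod.map f id)) : Fin n × Option α × Fin n × Λ → _) :=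
    hf.prodMap (Function.injective_id.prodMap (hf.prodMap Function.injective_id))
  have hfin : {t : Fin n × Option α × Fin n × G |
      ∃ m, (f t.1, t.2.1, f t.2.2.1, m) ∈ δ ∧ ν m = t.2.2.2}.Finite := by
    refine ((hδ.preimage hinj.injOn).image (Prod.map id (Prod.map id (Prod.map id ν)))).subset ?_
    rintro ⟨i, σ, j, _⟩ ⟨m, hm, rfl⟩
    exact ⟨(i, σ, j, m), hm, rfl⟩
  refine ⟨⟨Fin n, inferInstance, i, f ⁻¹' acc, _, hfin⟩, Set.ext fun w => ?_⟩
  refine GAutomaton.mem_lang_iff.trans (Iff.trans ⟨?_, ?_⟩ (hL w).symm)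
  · rintro ⟨j, hj, h⟩
    exact ⟨f j, hj, (run_preimage_iff hi htarget).mp ⟨j, rfl, h⟩⟩
  · rintro ⟨q, hq, h⟩
    obtain ⟨j, rfl, hrun⟩ := (run_preimage_iff hi htarget).mpr h
    exact ⟨j, hq, hrun⟩

theorem GRecognizable.map {H : Type*} [Group H] {L : Language α} (h : GRecognizable G L)
    {φ : G →* H} (hφ : Function.Injective φ) : GRecognizable H L := by
  obtain ⟨M, rfl⟩ := h
  refine .of_run φ M.finδ M.q0 M.acc fun w => ?_
  refine GAutomaton.mem_lang_iff.trans (exists_congr fun q => and_congr_right fun _ => ?_)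
  simpa using (run_comp_iff (ν := id) (δ := M.δ) hφ (x := 1)).symm

end Run

section FiniteIndex

variable {α S G H : Type*} [Group G] [Group H]

/-- The transitions of an `H`-automaton simulating the `G`-automaton with transition set `δ`, for a
homomorphism `φ : H →* G` and a right transversal `T` of its range. The register content `g` of the
latter is written uniquely as `φ h * c` with `c ∈ T`; the simulating automaton keeps `h` in
the register and `c` in its state. -/
def cosetTransitions (φ : H →* G) (T : Set G) (δ : Set (S × Option α × S × G)) :
    Set ((S × G) × Option α × (S × G) × H) :=
  {t | t.1.2 ∈ T ∧ t.2.2.1.2 ∈ T ∧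
    (t.1.1, t.2.1, t.2.2.1.1, t.1.2⁻¹ * φ t.2.2.2 * t.2.2.1.2) ∈ δ}

variable {φ : H →* G} {T : Set G} {δ : Set (S × Option α × S × G)}

lemma finite_cosetTransitions (hφ : Function.Injective φ) (hT : T.Finite) (hδ : δ.Finite) :
    (cosetTransitions φ T δ).Finite := by
  let f (t : (S × G) × Option α × (S × G) × H) : (S × Option α × S × G) × G × G :=
    ((t.1.1, t.2.1, t.2.2.1.1, t.1.2⁻¹ * φ t.2.2.2 * t.2.2.1.2), t.1.2, t.2.2.1.2)
  have hf : Function.Injective f := by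
    rintro ⟨⟨p, c⟩, σ, ⟨q, d⟩, h⟩ ⟨⟨p', c'⟩, σ', ⟨q', d'⟩, h'⟩ heq
    simp only [f, Prod.mk.injEq] at heq
    obtain ⟨⟨rfl, rfl, rfl, hh⟩, rfl, rfl⟩ := heq
    rw [hφ (mul_left_cancel (mul_right_cancel hh))]
  refine ((hδ.prod (hT.prod hT)).preimage hf.injOn).subset ?_
  rintro t ⟨hc, hd, ht⟩
  exact ⟨ht, hc, hd⟩

lemma run_of_run_cosetTransitions {s t : S × G} {h : H} {w : List α}
    (hrun : Run id (cosetTransitions φ T δ) s h w t) :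
    Run id δ s.1 (s.2⁻¹ * φ h * t.2) w t.1 := by
  induction hrun with
  | nil s => simpa using Run.nil s.1
  | cons ht _ ih =>
    convert Run.cons ht.2.2 ih using 1
    simp [mul_assoc]

lemma exists_run_cosetTransitions (hT : Subgroup.IsComplement (φ.range : Set G) T) {p q : S}
    {x : G} {w : List α} (hrun : Run id δ p x w q) {c : G} (hc : c ∈ T) :
    ∃ d ∈ T, ∃ h, φ h * d = c * x ∧ Run id (cosetTransitions φ T δ) (p, c) h w (q, d) := by
  induction hrun generalizing c with
  | nil p => exact ⟨c, hc, 1, by simp, .nil _⟩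
  | @cons p r q σ m x w hm _ ih =>
    obtain ⟨⟨⟨-, h₁, rfl⟩, c₁, hc₁⟩, hcm : φ h₁ * c₁ = c * m⟩ := hT.2 (c * m)
    obtain ⟨d, hd, h₂, heq, hrun⟩ := ih hc₁
    have hstep : ((p, c), σ, (r, c₁), h₁) ∈ cosetTransitions φ T δ :=
      ⟨hc, hc₁, by simpa [mul_assoc, hcm] using hm⟩
    exact ⟨d, hd, h₁ * h₂, by rw [map_mul, mul_assoc, heq, ← mul_assoc, hcm, id, mul_assoc],
      .cons hstep hrun⟩

theorem gRecognizable_iff_of_finiteIndex (hφ : Function.Injective φ) [φ.range.FiniteIndex]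
    {L : Language α} : GRecognizable G L ↔ GRecognizable H L := by
  refine ⟨?_, fun h => h.map hφ⟩
  rintro ⟨M, rfl⟩
  obtain ⟨T, hT, h1⟩ := Subgroup.exists_isComplement_right φ.range 1
  have hfin := finite_cosetTransitions hφ hT.finite_right M.finδ
  refine .of_run id hfin (M.q0, 1) (M.acc ×ˢ {1}) fun w => ?_
  refine GAutomaton.mem_lang_iff.trans ⟨?_, ?_⟩
  · rintro ⟨q, hq, hrun⟩
    obtain ⟨d, hd, h, heq, hrun'⟩ := exists_run_cosetTransitions hT hrun h1
    obtain ⟨hh, rfl⟩ : φ h = 1 ∧ d = 1 := by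
      simpa [Prod.ext_iff, Subtype.ext_iff] using
        @hT.1 (⟨φ h, h, rfl⟩, ⟨d, hd⟩) (⟨1, φ.range.one_mem⟩, ⟨1, h1⟩) (by simpa using heq)
    rw [(map_eq_one_iff φ hφ).mp hh] at hrun'
    exact ⟨(q, 1), ⟨hq, rfl⟩, hrun'⟩
  · rintro ⟨⟨q, _⟩, ⟨hq, rfl⟩, hrun⟩
    exact ⟨q, hq, by simpa using run_of_run_cosetTransitions hrun⟩

end FiniteIndex

section BalancedRun

variable {α X S : Type*}

/-- The value of a transition label that is either empty or a single letter of a free group. -/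
def letterVal : Option (X × Bool) → FreeGroup X
  | none => 1
  | some a => FreeGroup.mk [a]

/-- The runs whose nonempty labels match up like nested brackets, where every letter of the free
group serves as an opening bracket closed by its inverse. -/
inductive BalancedRun (δ : Set (S × Option α × S × Option (X × Bool))) : S → List α → S → Prop
  | nil (p : S) : BalancedRun δ p [] p
  | silent {p r q : S} {σ : Option α} {w : List α} (h : (p, σ, r, none) ∈ δ)
      (hr : BalancedRun δ r w q) : BalancedRun δ p (σ.toList ++ w) q
  | bracket {p r s t q : S} {σ τ : Option α} {x : X} {b : Bool} {w w' : List α}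
      (h : (p, σ, r, some (x, b)) ∈ δ) (hr : BalancedRun δ r w s)
      (h' : (s, τ, t, some (x, !b)) ∈ δ) (ht : BalancedRun δ t w' q) :
      BalancedRun δ p (σ.toList ++ w ++ (τ.toList ++ w')) q

variable {δ : Set (S × Option α × S × Option (X × Bool))}

lemma BalancedRun.append {p r q : S} {w w' : List α} (h : BalancedRun δ p w r)
    (h' : BalancedRun δ r w' q) : BalancedRun δ p (w ++ w') q := by
  induction h with
  | nil p => exact h'
  | silent h _ ih => simpa only [List.append_assoc] using silent h (ih h')
  | bracket h hr h₁ _ _ ih => simpa only [List.append_assoc] using bracket h hr h₁ (ih h')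

lemma freeGroup_mk_cons_cons_not (x : X) (b : Bool) (L : List (X × Bool)) :
    FreeGroup.mk ((x, b) :: (x, !b) :: L) = FreeGroup.mk L :=
  Quot.sound FreeGroup.Red.Step.cons_not

lemma BalancedRun.run {p q : S} {w : List α} (h : BalancedRun δ p w q) :
    Run letterVal δ p 1 w q := by
  induction h with
  | nil p => exact .nil p
  | silent h _ ih => simpa [letterVal] using Run.cons h ih
  | @bracket p r s t q σ τ x b w w' h _ h' _ ih ih' =>
    have hcancel : letterVal (some (x, b)) * letterVal (some (x, !b)) = 1 :=
      freeGroup_mk_cons_cons_not x b []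
    simpa [hcancel] using Run.cons h (ih.append (Run.cons h' ih'))

/-- The runs whose unmatched labels spell the word `L`, in the sense that they consist of the
letters of `L` separated by balanced runs. -/
inductive UnmatchedRun (δ : Set (S × Option α × S × Option (X × Bool))) :
    S → List (X × Bool) → List α → S → Prop
  | balanced {p q : S} {w : List α} (h : BalancedRun δ p w q) : UnmatchedRun δ p [] w q
  | letter {p r s q : S} {σ : Option α} {a : X × Bool} {L : List (X × Bool)} {w w' : List α}
      (h : BalancedRun δ p w r) (ha : (r, σ, s, some a) ∈ δ) (hs : UnmatchedRun δ s L w' q) :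
      UnmatchedRun δ p (a :: L) (w ++ (σ.toList ++ w')) q

lemma BalancedRun.append_unmatchedRun {p r q : S} {L : List (X × Bool)} {w w' : List α}
    (h : BalancedRun δ p w r) (h' : UnmatchedRun δ r L w' q) : UnmatchedRun δ p L (w ++ w') q := by
  cases h' with
  | balanced h' => exact .balanced (h.append h')
  | letter h' ha hs =>
    simpa only [List.append_assoc] using UnmatchedRun.letter (h.append h') ha hs

lemma UnmatchedRun.cancel {p r q : S} {σ : Option α} {x : X} {b : Bool} {L : List (X × Bool)}
    {w : List α} (ha : (p, σ, r, some (x, b)) ∈ δ) (h : UnmatchedRun δ r ((x, !b) :: L) w q) :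
    UnmatchedRun δ p L (σ.toList ++ w) q := by
  cases h with
  | letter h ha' hs =>
    simpa using (BalancedRun.bracket ha h ha' (.nil _)).append_unmatchedRun hs

lemma Run.exists_unmatchedRun {p q : S} {x : FreeGroup X} {w : List α}
    (h : Run letterVal δ p x w q) :
    ∃ L, FreeGroup.IsReduced L ∧ FreeGroup.mk L = x ∧ UnmatchedRun δ p L w q := by
  induction h with
  | nil p => exact ⟨[], .nil, rfl, .balanced (.nil p)⟩
  | @cons p r q σ m x w h _ ih =>
    obtain ⟨L, hL, rfl, hrun⟩ := ih
    rcases m with - | ⟨x, b⟩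
    · exact ⟨L, hL, (one_mul _).symm,
        by simpa using (BalancedRun.silent h (.nil r)).append_unmatchedRun hrun⟩
    · by_cases hcancel : ∃ L', L = (x, !b) :: L'
      · obtain ⟨L', rfl⟩ := hcancel
        exact ⟨L', hL.infix (List.suffix_cons _ _).isInfix,
          (freeGroup_mk_cons_cons_not x b L').symm, hrun.cancel h⟩
      · refine ⟨(x, b) :: L, ?_, rfl, .letter (.nil p) h hrun⟩
        rcases L with - | ⟨⟨y, c⟩, L⟩
        · exact .singleton
        · refine FreeGroup.isReduced_cons_cons.mpr ⟨?_, hL⟩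
          rintro (rfl : x = y)
          by_contra (hne : b ≠ c)
          exact hcancel ⟨L, by rw [Bool.eq_not_of_ne hne.symm]⟩

theorem run_letterVal_one_iff {p q : S} {w : List α} :
    Run letterVal δ p 1 w q ↔ BalancedRun δ p w q := by
  classical
  refine ⟨fun h => ?_, BalancedRun.run⟩
  obtain ⟨L, hL, hone, hrun⟩ := h.exists_unmatchedRun
  obtain rfl : L = [] := by
    rw [← hL.reduce_eq, ← FreeGroup.toWord_mk, hone, FreeGroup.toWord_one]
  cases hrun with
  | balanced h => exact h

end BalancedRun

section Splitting

variable {α X S Λ : Type*}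

/-- The transitions obtained by spelling out the word `word m` of every label `m` letter by letter.
A state `(q, v)` stands for the state `q` with the suffix `v` of a label still to be spelled out. -/
inductive SplitTransition (word : Λ → List (X × Bool)) (δ : Set (S × Option α × S × Λ)) :
    (S × List (X × Bool)) × Option α × (S × List (X × Bool)) × Option (X × Bool) → Prop
  | start {p q : S} {σ : Option α} {m : Λ} (h : (p, σ, q, m) ∈ δ) :
      SplitTransition word δ ((p, []), σ, (q, word m), none)
  | letter {p q : S} {σ : Option α} {m : Λ} {a : X × Bool} {v : List (X × Bool)}
      (h : (p, σ, q, m) ∈ δ) (hv : a :: v <:+ word m) :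
      SplitTransition word δ ((q, a :: v), none, (q, v), some a)

variable {word : Λ → List (X × Bool)} {δ : Set (S × Option α × S × Λ)}

lemma finite_splitTransition (hδ : δ.Finite) : {t | SplitTransition word δ t}.Finite := by
  refine ((hδ.image fun t => ((t.1, []), t.2.1, (t.2.2.1, word t.2.2.2), none)).union
    (hδ.biUnion fun t _ => (List.finite_toSet (word t.2.2.2).tails).image
      fun u => ((t.2.2.1, u), none, (t.2.2.1, u.tail), u.head?))).subset ?_
  rintro _ (h | ⟨h, hv⟩)
  · exact .inl ⟨_, h, rfl⟩
  · exact .inr (Set.mem_biUnion h ⟨_, (List.mem_tails _ _).mpr hv, rfl⟩)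

lemma run_splitTransition_of_suffix {p q : S} {σ : Option α} {m : Λ} (h : (p, σ, q, m) ∈ δ)
    {v : List (X × Bool)} (hv : v <:+ word m) :
    Run letterVal {t | SplitTransition word δ t} (q, v) (FreeGroup.mk v) [] (q, []) := by
  induction v with
  | nil => exact .nil _
  | cons a v ih => exact .cons (.letter h hv) (ih ((List.suffix_cons a v).trans hv))

lemma exists_run_of_run_splitTransition {s t : S × List (X × Bool)} {x : FreeGroup X} {w : List α}
    (h : Run letterVal {t | SplitTransition word δ t} s x w t) (ht : t.2 = []) :
    ∃ y, Run (FreeGroup.mk ∘ word) δ s.1 y w t.1 ∧ x = FreeGroup.mk s.2 * y := by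
  induction h with
  | nil s => exact ⟨1, .nil _, by rw [ht]; rfl⟩
  | cons h _ ih =>
    obtain ⟨y, hy, rfl⟩ := ih ht
    rcases h with h | h
    · exact ⟨_, .cons h hy, rfl⟩
    · exact ⟨y, hy, (mul_assoc _ _ _).symm⟩

theorem run_splitTransition_iff {p q : S} {x : FreeGroup X} {w : List α} :
    Run letterVal {t | SplitTransition word δ t} (p, []) x w (q, []) ↔
      Run (FreeGroup.mk ∘ word) δ p x w q := by
  constructor
  · intro h
    obtain ⟨y, hy, rfl⟩ := exists_run_of_run_splitTransition h rfl
    exact (one_mul y).symm ▸ hy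
  · intro h
    induction h with
    | nil p => exact .nil _
    | cons h _ ih =>
      simpa [letterVal] using Run.cons (ν := letterVal) (.start h)
        ((run_splitTransition_of_suffix h List.suffix_rfl).append ih)

end Splitting

section FormLanguage

variable {T : Type*}

/-- The language denoted by a sentential form when each nonterminal `n` is interpreted as the
language `I n`. -/
def formLanguage {N : Type*} (I : N → Language T) (u : List (Symbol T N)) : Language T :=
  (u.map fun
    | .terminal t => ({[t]} : Language T)
    | .nonterminal n => I n).prod

lemma formLanguage_append {N : Type*} (I : N → Language T) (u v : List (Symbol T N)) :
    formLanguage I (u ++ v) = formLanguage I u * formLanguage I v := by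
  simp only [formLanguage, List.map_append, List.prod_append]

lemma formLanguage_map_terminal {N : Type*} (I : N → Language T) (w : List T) :
    formLanguage I (w.map .terminal) = {w} := by
  induction w with
  | nil => rfl
  | cons t w ih =>
    rw [List.map_cons, ← List.singleton_append, formLanguage_append, ih]
    exact (congrArg (· * {w}) (mul_one ({[t]} : Language T))).trans Set.image2_singleton

variable {g : ContextFreeGrammar T}

theorem language_le_of_forall_rules {I : g.NT → Language T}
    (hI : ∀ r ∈ g.rules, formLanguage I r.output ≤ I r.input) : g.language ≤ I g.initial := by
  have hmono {u v : List (Symbol T g.NT)} (h : g.Derives u v) :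
      formLanguage I v ≤ formLanguage I u := by
    induction h with
    | refl => exact le_rfl
    | tail _ h ih =>
      refine le_trans ?_ ih
      obtain ⟨r, hr, hrw⟩ := h
      obtain ⟨a, b, rfl, rfl⟩ := hrw.exists_parts
      simp only [formLanguage_append]
      gcongr
      simpa [formLanguage] using hI r hr
  intro w hw
  have hle := hmono hw
  rw [formLanguage_map_terminal] at hle
  simpa [formLanguage] using hle rfl

end FormLanguage

section Grammar

variable {T : Type*} {g : ContextFreeGrammar T}

lemma produces_output {r : ContextFreeRule T g.NT} (hr : r ∈ g.rules) :
    g.Produces [.nonterminal r.input] r.output :=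
  ⟨r, hr, .input_output⟩

lemma derives_append {u v u' v' : List (Symbol T g.NT)} (h : g.Derives u v)
    (h' : g.Derives u' v') : g.Derives (u ++ u') (v ++ v') :=
  (h.append_right u').trans (h'.append_left v)

end Grammar

section RunGrammar

variable {α X S : Type*}

/-- The right-hand side `σ (r, s)`, where `(r, s)` is the nonterminal generating the words read by
the balanced runs from `r` to `s`. -/
def runForm (σ : Option α) (r s : S) : List (Symbol α (Option (S × S))) :=
  σ.toList.map .terminal ++ [.nonterminal (some (r, s))]

/-- The rules of the grammar of the balanced runs with states in `V`: the nonterminal `some (p, q)`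
generates the words read by such runs from `p` to `q`, and the initial nonterminal `none` those read
from `q₀` to an accepting state. -/
inductive BalancedRule (δ : Set (S × Option α × S × Option (X × Bool))) (q₀ : S) (acc V : Set S) :
    ContextFreeRule α (Option (S × S)) → Prop
  | start {q : S} (hq : q ∈ acc) (hqV : q ∈ V) : BalancedRule δ q₀ acc V ⟨none, runForm none q₀ q⟩
  | nil {p : S} (hp : p ∈ V) : BalancedRule δ q₀ acc V ⟨some (p, p), []⟩
  | silent {p r q : S} {σ : Option α} (h : (p, σ, r, none) ∈ δ) (hq : q ∈ V) :
      BalancedRule δ q₀ acc V ⟨some (p, q), runForm σ r q⟩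
  | bracket {p r s t q : S} {σ τ : Option α} {x : X} {b : Bool}
      (h : (p, σ, r, some (x, b)) ∈ δ) (h' : (s, τ, t, some (x, !b)) ∈ δ) (hq : q ∈ V) :
      BalancedRule δ q₀ acc V ⟨some (p, q), runForm σ r s ++ runForm τ t q⟩

variable {δ : Set (S × Option α × S × Option (X × Bool))} {q₀ : S} {acc V : Set S}

lemma finite_balancedRule (hδ : δ.Finite) (hV : V.Finite) :
    {r | BalancedRule δ q₀ acc V r}.Finite := by
  refine ((((hV.image fun q => ⟨none, runForm none q₀ q⟩).union
    (hV.image fun p => ⟨some (p, p), []⟩)).union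
    ((hδ.prod hV).image fun t => ⟨some (t.1.1, t.2), runForm t.1.2.1 t.1.2.2.1 t.2⟩)).union
    ((hδ.prod (hδ.prod hV)).image fun t => ⟨some (t.1.1, t.2.2),
      runForm t.1.2.1 t.1.2.2.1 t.2.1.1 ++ runForm t.2.1.2.1 t.2.1.2.2.1 t.2.2⟩)).subset ?_
  rintro _ (⟨-, hq⟩ | hp | ⟨h, hq⟩ | ⟨h, h', hq⟩)
  · exact .inl (.inl (.inl ⟨_, hq, rfl⟩))
  · exact .inl (.inl (.inr ⟨_, hp, rfl⟩))
  · exact .inl (.inr ⟨(_, _), ⟨h, hq⟩, rfl⟩)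
  · exact .inr ⟨(_, _, _), ⟨h, h', hq⟩, rfl⟩

/-- The interpretation of the nonterminals of the grammar of balanced runs. -/
def balancedLanguage (δ : Set (S × Option α × S × Option (X × Bool))) (q₀ : S) (acc : Set S) :
    Option (S × S) → Language α
  | none => {w | ∃ q ∈ acc, BalancedRun δ q₀ w q}
  | some (p, q) => {w | BalancedRun δ p w q}

lemma formLanguage_runForm (I : Option (S × S) → Language α) (σ : Option α) (r s : S) :
    formLanguage I (runForm σ r s) = {σ.toList} * I (some (r, s)) := by
  rw [runForm, formLanguage_append, formLanguage_map_terminal]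
  exact congrArg _ (mul_one _)

lemma formLanguage_output_le_balancedLanguage {r : ContextFreeRule α (Option (S × S))}
    (hr : BalancedRule δ q₀ acc V r) :
    formLanguage (balancedLanguage δ q₀ acc) r.output ≤ balancedLanguage δ q₀ acc r.input := by
  rcases hr with ⟨hq, -⟩ | hp | ⟨h, -⟩ | ⟨h, h', -⟩
  · rw [formLanguage_runForm]
    rintro _ ⟨_, rfl, w, hw, rfl⟩
    exact ⟨_, hq, hw⟩
  · rintro _ rfl
    exact .nil _
  · rw [formLanguage_runForm]
    rintro _ ⟨_, rfl, w, hw, rfl⟩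
    exact .silent h hw
  · rw [formLanguage_append, formLanguage_runForm, formLanguage_runForm]
    rintro _ ⟨_, ⟨_, rfl, w, hw, rfl⟩, _, ⟨_, rfl, w', hw', rfl⟩, rfl⟩
    exact .bracket h hw h' hw'

lemma BalancedRun.mem_of_mem (hV : ∀ t ∈ δ, t.2.2.1 ∈ V) {p q : S} {w : List α}
    (h : BalancedRun δ p w q) (hp : p ∈ V) : q ∈ V := by
  induction h with
  | nil p => exact hp
  | silent h _ ih => exact ih (hV _ h)
  | bracket _ _ h' _ _ ih => exact ih (hV _ h')

end RunGrammar

section RunGrammarDerivations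

variable {α X : Type*} {S : Type} {δ : Set (S × Option α × S × Option (X × Bool))} {q₀ : S}
  {acc V : Set S}

/-- The grammar of the balanced runs with states in the finite set `V`. -/
noncomputable def runGrammar (hδ : δ.Finite) (hV : V.Finite) (q₀ : S) (acc : Set S) :
    ContextFreeGrammar α where
  NT := Option (S × S)
  initial := none
  rules := (finite_balancedRule (q₀ := q₀) (acc := acc) hδ hV).toFinset

lemma mem_rules_runGrammar {hδ : δ.Finite} {hV : V.Finite}
    {r : ContextFreeRule α (Option (S × S))} :
    r ∈ (runGrammar hδ hV q₀ acc).rules ↔ BalancedRule δ q₀ acc V r :=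
  Set.Finite.mem_toFinset _

lemma derives_runForm {hδ : δ.Finite} {hV : V.Finite} {r s : S} {w : List α} (σ : Option α)
    (h : (runGrammar hδ hV q₀ acc).Derives [.nonterminal (some (r, s))] (w.map .terminal)) :
    (runGrammar hδ hV q₀ acc).Derives (runForm σ r s) ((σ.toList ++ w).map .terminal) := by
  rw [List.map_append]
  exact h.append_left _

lemma BalancedRun.derives {hδ : δ.Finite} {hV : V.Finite} (htarget : ∀ t ∈ δ, t.2.2.1 ∈ V)
    {p q : S} {w : List α} (h : BalancedRun δ p w q) (hp : p ∈ V) :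
    (runGrammar hδ hV q₀ acc).Derives [.nonterminal (some (p, q))] (w.map .terminal) := by
  induction h with
  | nil p => exact (produces_output (mem_rules_runGrammar.mpr (.nil hp))).single
  | silent h hr ih =>
    have hq := hr.mem_of_mem htarget (htarget _ h)
    exact (produces_output (mem_rules_runGrammar.mpr (.silent h hq))).trans_derives
      (derives_runForm _ (ih (htarget _ h)))
  | bracket h _ h' ht ih ih' =>
    have hq := ht.mem_of_mem htarget (htarget _ h')
    refine (produces_output (mem_rules_runGrammar.mpr (.bracket h h' hq))).trans_derives ?_
    rw [List.map_append]
    exact derives_append (derives_runForm _ (ih (htarget _ h)))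
      (derives_runForm _ (ih' (htarget _ h')))

theorem isContextFree_of_balancedRun (hδ : δ.Finite) (q₀ : S) (acc : Set S) {L : Language α}
    (hL : ∀ w, w ∈ L ↔ ∃ q ∈ acc, BalancedRun δ q₀ w q) : L.IsContextFree := by
  let V : Set S := insert q₀ ((fun t => t.2.2.1) '' δ)
  have hV : V.Finite := (hδ.image _).insert q₀
  have htarget (t) (ht : t ∈ δ) : t.2.2.1 ∈ V := Set.mem_insert_of_mem _ ⟨t, ht, rfl⟩
  have hq₀ : q₀ ∈ V := Set.mem_insert _ _
  refine ⟨runGrammar hδ hV q₀ acc, le_antisymm (fun w hw => (hL w).mpr ?_) fun w hw => ?_⟩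
  · exact language_le_of_forall_rules (I := balancedLanguage δ q₀ acc)
      (fun r hr => formLanguage_output_le_balancedLanguage (mem_rules_runGrammar.mp hr)) hw
  · obtain ⟨q, hq, h⟩ := (hL w).mp hw
    have hqV := h.mem_of_mem htarget hq₀
    exact (produces_output (mem_rules_runGrammar.mpr (.start hq hqV))).trans_derives
      (derives_runForm none (h.derives htarget hq₀))

end RunGrammarDerivations

theorem GRecognizable.isContextFree {α : Type*} {X : Type} {L : Language α}
    (h : GRecognizable (FreeGroup X) L) : L.IsContextFree := by
  classical
  obtain ⟨M, rfl⟩ := h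
  refine isContextFree_of_balancedRun (finite_splitTransition (word := FreeGroup.toWord) M.finδ)
    (M.q0, []) (M.acc ×ˢ {[]}) fun w => ?_
  have hword : FreeGroup.mk ∘ FreeGroup.toWord = (id : FreeGroup X → FreeGroup X) :=
    funext fun _ => FreeGroup.mk_toWord
  simp only [GAutomaton.mem_lang_iff, ← run_letterVal_one_iff, Prod.exists, Set.mem_prod,
    Set.mem_singleton_iff, and_assoc, exists_and_left, exists_eq_left, run_splitTransition_iff,
    hword]

section Parser

variable {α : Type*}

/-- The finitely many words of symbols that can remain to be processed while a parser of `g` works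
through the right-hand side of a rule. -/
def remainders (g : ContextFreeGrammar α) : Set (List (Symbol α g.NT)) :=
  {β | β <:+ [.nonterminal g.initial] ∨ ∃ r ∈ g.rules, β <:+ r.output}

/-- The transitions of a top-down parser of `g`. The state is the remainder of the right-hand side
being processed. Before working through a rule for a nonterminal, the parser multiplies the register
by the remainder `β` at which it has to resume afterwards, and resuming at `β` it multiplies
by `β⁻¹`. -/
inductive ParserTransition (g : ContextFreeGrammar α) :
    List (Symbol α g.NT) × Option α × List (Symbol α g.NT) × Option (remainders g × Bool) → Prop
  | read {t : α} {β : List (Symbol α g.NT)} (hβ : .terminal t :: β ∈ remainders g) :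
      ParserTransition g (.terminal t :: β, some t, β, none)
  | call {r : ContextFreeRule α g.NT} (hr : r ∈ g.rules) (β : remainders g) :
      ParserTransition g (.nonterminal r.input :: β, none, r.output, some (β, true))
  | ret (β : remainders g) : ParserTransition g ([], none, β, some (β, false))

variable {g : ContextFreeGrammar α}

lemma mem_remainders_of_suffix {β γ : List (Symbol α g.NT)} (h : β <:+ γ) (hγ : γ ∈ remainders g) :
    β ∈ remainders g :=
  hγ.imp h.trans fun ⟨r, hr, hγr⟩ => ⟨r, hr, h.trans hγr⟩

lemma output_mem_remainders {r : ContextFreeRule α g.NT} (hr : r ∈ g.rules) :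
    r.output ∈ remainders g :=
  .inr ⟨r, hr, List.suffix_rfl⟩

lemma finite_remainders (g : ContextFreeGrammar α) : (remainders g).Finite := by
  refine ((List.finite_toSet [.nonterminal g.initial].tails).union
    (g.rules.finite_toSet.biUnion fun r _ => List.finite_toSet r.output.tails)).subset ?_
  rintro β (hβ | ⟨r, hr, hβ⟩)
  · exact .inl ((List.mem_tails _ _).mpr hβ)
  · exact .inr (Set.mem_biUnion hr ((List.mem_tails _ _).mpr hβ))

lemma finite_parserTransition (g : ContextFreeGrammar α) : {t | ParserTransition g t}.Finite := by
  have hV := finite_remainders g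
  have := hV.to_subtype
  refine (((hV.image fun
    | .terminal t :: β => (.terminal t :: β, some t, β, none)
    | β => (β, none, β, none)).union
    ((g.rules.finite_toSet.prod Set.finite_univ).image fun t =>
      (.nonterminal t.1.input :: t.2.1, none, t.1.output, some (t.2, true)))).union
    (Set.finite_range fun β : remainders g => ([], none, β.1, some (β, false)))).subset ?_
  rintro _ (hβ | ⟨hr, β⟩ | β)
  · exact .inl (.inl ⟨_, hβ, rfl⟩)
  · exact .inl (.inr ⟨(_, β), ⟨hr, trivial⟩, rfl⟩)
  · exact .inr ⟨β, rfl⟩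

lemma BalancedRun.exists_derives {β γ : List (Symbol α g.NT)} {w : List α}
    (h : BalancedRun {t | ParserTransition g t} β w γ) :
    ∃ u, β = u ++ γ ∧ g.Derives u (w.map .terminal) := by
  induction h with
  | nil β => exact ⟨[], rfl, .refl _⟩
  | silent h _ ih =>
    obtain ⟨u, hu, hder⟩ := ih
    rcases h with @⟨t⟩
    exact ⟨.terminal t :: u, congrArg (_ :: ·) hu, hder.append_left [.terminal t]⟩
  | bracket h _ h' _ ih ih' =>
    obtain ⟨u, hu, hder⟩ := ih
    obtain ⟨u', hu', hder'⟩ := ih'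
    rcases h with _ | @⟨r, hr, β⟩ | β <;> rcases h' with _ | @⟨r', hr', _⟩ | _
    · rw [List.append_nil] at hu
      subst hu
      refine ⟨.nonterminal r.input :: u', congrArg (_ :: ·) hu', ?_⟩
      rw [List.map_append]
      exact derives_append ((produces_output hr).trans_derives hder) hder'
    · have hlength := congrArg List.length hu
      simp only [List.length_append, List.length_cons] at hlength
      lia

/-- The words that the parser can read while it removes the nonterminal `n` from its state. -/
def parsedLanguage (g : ContextFreeGrammar α) (n : g.NT) : Language α :=
  {w | ∀ β, .nonterminal n :: β ∈ remainders g →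
    BalancedRun {t | ParserTransition g t} (.nonterminal n :: β) w β}

lemma balancedRun_of_mem_formLanguage {u γ : List (Symbol α g.NT)} (hu : u ++ γ ∈ remainders g)
    {w : List α} (hw : w ∈ formLanguage (parsedLanguage g) u) :
    BalancedRun {t | ParserTransition g t} (u ++ γ) w γ := by
  induction u generalizing w with
  | nil =>
    obtain rfl := hw
    exact .nil _
  | cons a u ih =>
    obtain ⟨v, hv, w, hw, rfl⟩ := hw
    have hrun := ih (mem_remainders_of_suffix (List.suffix_cons _ _) hu) hw
    rcases a with t | n
    · obtain rfl := hv
      exact .silent (.read hu) hrun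
    · exact (hv _ hu).append hrun

lemma formLanguage_output_le_parsedLanguage {r : ContextFreeRule α g.NT} (hr : r ∈ g.rules) :
    formLanguage (parsedLanguage g) r.output ≤ parsedLanguage g r.input := by
  intro w hw β hβ
  have hrun := balancedRun_of_mem_formLanguage (γ := [])
    (by simpa only [List.append_nil] using output_mem_remainders hr) hw
  rw [List.append_nil] at hrun
  have hβ' := mem_remainders_of_suffix (List.suffix_cons _ _) hβ
  simpa using BalancedRun.bracket (b := true) (.call hr ⟨β, hβ'⟩) hrun (.ret ⟨β, hβ'⟩) (.nil β)

theorem mem_language_iff_balancedRun {w : List α} :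
    w ∈ g.language ↔
      BalancedRun {t | ParserTransition g t} [.nonterminal g.initial] w [] := by
  constructor
  · intro hw
    exact language_le_of_forall_rules (fun _ => formLanguage_output_le_parsedLanguage) hw _
      (.inl List.suffix_rfl)
  · intro h
    obtain ⟨u, hu, hder⟩ := h.exists_derives
    rw [List.append_nil] at hu
    subst hu
    exact hder

theorem gRecognizable_freeGroup_remainders (g : ContextFreeGrammar α) :
    GRecognizable (FreeGroup (remainders g)) g.language :=
  .of_run letterVal (finite_parserTransition g) [.nonterminal g.initial] {[]} fun w => by
    simp only [mem_language_iff_balancedRun, Set.mem_singleton_iff, exists_eq_left,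
      run_letterVal_one_iff]

end Parser

section FreeGroupEmbedding

/-- The action of a group `K` on the free group over itself by translation of the generators. -/
def freeGroupShift (K : Type*) [Group K] : K →* MulAut (FreeGroup K) where
  toFun k := FreeGroup.freeGroupCongr (Equiv.mulLeft k)
  map_one' := by ext; simp
  map_mul' k k' := by ext; simp [FreeGroup.map.comp, Function.comp_def]

/-- The homomorphism sending the generator indexed by `n` to the conjugate `bⁿ a b⁻ⁿ` of the
first generator `a` of the free group of rank two by a power of the second generator `b`. -/
def conjugatesHom : FreeGroup (Multiplicative ℤ) →* FreeGroup (Fin 2) :=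
  FreeGroup.lift fun n =>
    .of 1 ^ n.toAdd * .of 0 * (.of 1 ^ n.toAdd)⁻¹

/-- The homomorphism realizing `a` as the generator of index `0` of the free group over `ℤ`, and
`b` as the generator of `ℤ` acting on this group by translation. -/
def toShiftProduct : FreeGroup (Fin 2) →*
    FreeGroup (Multiplicative ℤ) ⋊[freeGroupShift (Multiplicative ℤ)] Multiplicative ℤ :=
  FreeGroup.lift ![.inl (.of 1), .inr (.ofAdd 1)]

lemma toShiftProduct_comp_conjugatesHom :
    toShiftProduct.comp conjugatesHom = SemidirectProduct.inl := by
  ext n : 1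
  have hpow : (Multiplicative.ofAdd (1 : ℤ)) ^ n.toAdd = n := by
    rw [← ofAdd_zsmul, smul_eq_mul, mul_one, ofAdd_toAdd]
  calc toShiftProduct (conjugatesHom (.of n))
      = .inr n * .inl (.of 1) * (.inr n)⁻¹ := by
        simp only [toShiftProduct, conjugatesHom, FreeGroup.lift_apply_of, map_mul, map_inv,
          map_zpow, Matrix.cons_val_zero, Matrix.cons_val_one]
        rw [← map_zpow, hpow]
    _ = .inl (freeGroupShift _ n (.of 1)) := by rw [← map_inv, ← SemidirectProduct.inl_aut]
    _ = .inl (.of n) := by simp [freeGroupShift]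

lemma conjugatesHom_injective : Function.Injective conjugatesHom :=
  .of_comp (f := toShiftProduct) <| by
    rw [← MonoidHom.coe_comp, toShiftProduct_comp_conjugatesHom]
    exact SemidirectProduct.inl_injective

theorem exists_injective_freeGroup_hom (X : Type*) [Countable X] :
    ∃ φ : FreeGroup X →* FreeGroup (Fin 2), Function.Injective φ := by
  obtain ⟨f, hf⟩ := exists_injective_nat X
  exact ⟨conjugatesHom.comp (FreeGroup.map fun x => .ofAdd (f x : ℤ)),
    conjugatesHom_injective.comp (FreeGroup.map_injective fun x y h => hf (by simpa using h))⟩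

end FreeGroupEmbedding

theorem isContextFree_iff_gRecognizable_freeGroup {α : Type*} {L : Language α} :
    L.IsContextFree ↔ GRecognizable (FreeGroup (Fin 2)) L := by
  refine ⟨?_, fun h => h.isContextFree⟩
  rintro ⟨g, rfl⟩
  have := (finite_remainders g).to_subtype
  obtain ⟨φ, hφ⟩ := exists_injective_freeGroup_hom (remainders g)
  exact (gRecognizable_freeGroup_remainders g).map hφ

section Sanov

open ModularGroup UpperHalfPlane Matrix.SpecialLinearGroup

open scoped Function MatrixGroups Pointwise

theorem injective_lift_conj_of_ping_pong.{u} {ι G : Type u} {β : Type*} [Nontrivial ι] [Group G]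
    [MulAction G β] {t : G} {s : ι → G} {X Y : Set β} (hX : X.Nonempty) (hXY : Disjoint X Y)
    (hs : Pairwise (Disjoint on fun i => s i • (X ∪ Y))) (ht : t • Yᶜ ⊆ X) (ht' : t⁻¹ • Xᶜ ⊆ Y) :
    Function.Injective (FreeGroup.lift fun i => s i * t * (s i)⁻¹) := by
  have hdisj {i j : ι} (hij : i ≠ j) {U V : Set β} (hU : U ⊆ X ∪ Y) (hV : V ⊆ X ∪ Y) :
      Disjoint (s i • U) (s j • V) :=
    (hs hij).mono (Set.smul_set_mono hU) (Set.smul_set_mono hV)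
  refine FreeGroup.injective_lift_of_ping_pong _ (fun i => s i • X) (fun i => s i • Y)
    (fun i => hX.smul_set (a := s i))
    (fun _ _ hij => hdisj hij Set.subset_union_left Set.subset_union_left)
    (fun _ _ hij => hdisj hij Set.subset_union_right Set.subset_union_right)
    (fun i j => ?_) (fun i => ?_) (fun i => ?_)
  · obtain rfl | hij := eq_or_ne i j
    · exact Set.disjoint_smul_set.2 hXY
    · exact hdisj hij Set.subset_union_left Set.subset_union_right
  · rw [← Set.smul_set_compl, smul_smul, inv_mul_cancel_right, mul_smul]
    exact Set.smul_set_mono ht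
  · rw [← Set.smul_set_compl, Pi.inv_apply, smul_smul, mul_inv_rev, inv_inv, mul_inv_rev,
      ← mul_assoc, inv_mul_cancel_right, mul_smul]
    exact Set.smul_set_mono ht'

/-- The homomorphism from the free group of rank two onto Sanov's subgroup of `SL(2, ℤ)`. Its
generators are `T²` and the conjugate of `T²` by `S`, the matrices `!![1, 2; 0, 1]` and
`!![1, 0; -2, 1]`. -/
def sanovHom : FreeGroup (Fin 2) →* SL(2, ℤ) :=
  FreeGroup.lift fun i => ![1, S] i * T ^ 2 * (![1, S] i)⁻¹

/-- The points of the upper half-plane to the right of the strip `-1 ≤ Re z < 1`. -/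
def rightOfStrip : Set ℍ := {z | 1 ≤ z.re}

/-- The points of the upper half-plane to the left of the strip `-1 ≤ Re z < 1`. -/
def leftOfStrip : Set ℍ := {z | z.re < -1}

lemma T_sq_smul_compl_leftOfStrip : T ^ 2 • leftOfStripᶜ ⊆ rightOfStrip := by
  rintro _ ⟨z, hz, rfl⟩
  have hre : (T ^ 2 • z).re = z.re + 2 := mod_cast re_T_zpow_smul z 2
  have hz' : -1 ≤ z.re := not_lt.1 hz
  exact (by linarith : 1 ≤ (T ^ 2 • z).re)

lemma T_sq_inv_smul_compl_rightOfStrip : (T ^ 2)⁻¹ • rightOfStripᶜ ⊆ leftOfStrip := by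
  rintro _ ⟨z, hz, rfl⟩
  have hre : ((T ^ 2)⁻¹ • z).re = z.re - 2 := by
    simpa [sub_eq_add_neg] using re_T_zpow_smul z (-2)
  have hz' : z.re < 1 := not_le.1 hz
  exact (by linarith : ((T ^ 2)⁻¹ • z).re < -1)

lemma disjoint_rightOfStrip_leftOfStrip : Disjoint rightOfStrip leftOfStrip :=
  Set.disjoint_left.2 fun z (h : 1 ≤ z.re) (h' : z.re < -1) => by linarith

lemma one_lt_normSq_of_one_le_abs_re {z : ℍ} (hz : 1 ≤ |z.re|) : 1 < Complex.normSq z := by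
  have : 0 < z.im * z.im := mul_pos z.im_pos z.im_pos
  have : 1 ≤ z.re * z.re := by rwa [← sq, one_le_sq_iff_one_le_abs]
  rw [Complex.normSq_apply, coe_re, coe_im]
  linarith

lemma disjoint_S_smul {U : Set ℍ} (hU : ∀ z ∈ U, 1 ≤ |z.re|) : Disjoint U (S • U) := by
  rw [Set.disjoint_right]
  rintro _ ⟨z, hz, rfl⟩ hSz
  exact (normSq_S_smul_lt_one (one_lt_normSq_of_one_le_abs_re (hU z hz))).not_gt
    (one_lt_normSq_of_one_le_abs_re (hU _ hSz))

theorem sanovHom_injective : Function.Injective sanovHom := by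
  have hS : Disjoint (rightOfStrip ∪ leftOfStrip) (S • (rightOfStrip ∪ leftOfStrip)) := by
    refine disjoint_S_smul ?_
    rintro z ((hz : 1 ≤ z.re) | (hz : z.re < -1))
    · exact hz.trans (le_abs_self _)
    · exact le_abs.2 (.inr (by linarith))
  refine injective_lift_conj_of_ping_pong ⟨⟨⟨1, 1⟩, one_pos⟩, le_refl (1 : ℝ)⟩
    disjoint_rightOfStrip_leftOfStrip ?_ T_sq_smul_compl_leftOfStrip
    T_sq_inv_smul_compl_rightOfStrip
  intro i j hij
  fin_cases i <;> fin_cases j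
  · exact absurd rfl hij
  · simpa [Function.onFun] using hS
  · simpa [Function.onFun] using hS.symm
  · exact absurd rfl hij

lemma coe_T_sq_zpow_mul (k : ℤ) (M : SL(2, ℤ)) : ((T ^ 2) ^ k * M).1 =
    !![M 0 0 + 2 * k * M 1 0, M 0 1 + 2 * k * M 1 1; M 1 0, M 1 1] := by
  rw [← zpow_natCast, ← zpow_mul, coe_mul, coe_T_zpow]
  ext i j
  fin_cases i <;> fin_cases j <;> simp [Matrix.mul_apply]

lemma coe_S_mul_T_sq_zpow_mul_S_inv_mul (k : ℤ) (M : SL(2, ℤ)) :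
    (S * (T ^ 2) ^ k * S⁻¹ * M).1 =
      !![M 0 0, M 0 1; M 1 0 - 2 * k * M 0 0, M 1 1 - 2 * k * M 0 1] := by
  rw [mul_assoc, mul_assoc, coe_mul, coe_T_sq_zpow_mul]
  ext i j
  fin_cases i <;> fin_cases j <;>
    simp [Matrix.mul_apply, coe_S, Matrix.adjugate_fin_two_of] <;> ring

lemma eq_T_sq_zpow_of_lower_left_eq_zero {k : ℤ} {M : SL(2, ℤ)} (h00 : M 0 0 % 4 = 1)
    (h01 : M 0 1 = 2 * k) (h10 : M 1 0 = 0) : M = (T ^ 2) ^ k := by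
  have hdet : M 0 0 * M 1 1 = 1 := by
    have := M.det_coe
    rwa [Matrix.det_fin_two, h10, mul_zero, sub_zero] at this
  obtain ⟨h00, h11⟩ | ⟨h00', -⟩ := Int.mul_eq_one_iff_eq_one_or_neg_one.1 hdet
  · rw [← mul_one ((T ^ 2) ^ k)]
    refine Subtype.ext ?_
    rw [coe_T_sq_zpow_mul]
    ext i j
    fin_cases i <;> fin_cases j <;> simp [h00, h01, h10, h11]
  · omega

/-- The powers of `T²` and of its conjugate by `S` run the Euclidean algorithm with even quotients
on the first column. -/
theorem mem_of_T_sq_mem {H : Subgroup SL(2, ℤ)} (hT : T ^ 2 ∈ H) (hS : S * T ^ 2 * S⁻¹ ∈ H)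
    {M : SL(2, ℤ)} (h00 : M 0 0 % 4 = 1) (h01 : 2 ∣ M 0 1) (h10 : 2 ∣ M 1 0) : M ∈ H := by
  have hTk (k : ℤ) : (T ^ 2) ^ k ∈ H := H.zpow_mem hT k
  have hSk (k : ℤ) : S * (T ^ 2) ^ k * S⁻¹ ∈ H := by
    rw [← conj_zpow]; exact H.zpow_mem hS k
  induction hn : (M 0 0).natAbs + (M 1 0).natAbs using Nat.strong_induction_on generalizing M with
  | _ n ih =>
    have of_mul {K : SL(2, ℤ)} (hK : K ∈ H) {a b c d : ℤ} (h : (K * M).1 = !![a, b; c, d])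
        (ha : a % 4 = 1) (hb : 2 ∣ b) (hc : 2 ∣ c) (hlt : a.natAbs + c.natAbs < n) : M ∈ H :=
      (H.mul_mem_cancel_left hK).1
        (ih _ hlt (by rwa [h]) (by rwa [h]) (by rwa [h]) (by rw [h]; rfl))
    have hcases : M 1 0 = 0 ∨ ∃ k : ℤ,
        (M 0 0 + 2 * k * M 1 0).natAbs + (M 1 0).natAbs < n ∨
        (M 0 0).natAbs + (M 1 0 - 2 * k * M 0 0).natAbs < n := by
      by_contra! h
      have := h.2 1
      have := h.2 (-1)
      omega
    obtain h0 | ⟨k, hlt | hlt⟩ := hcases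
    · obtain ⟨k, hk⟩ := h01
      rw [eq_T_sq_zpow_of_lower_left_eq_zero h00 hk h0]
      exact hTk k
    · refine of_mul (hTk k) (coe_T_sq_zpow_mul k M) ?_ ?_ h10 hlt
      · obtain ⟨c, hc⟩ := h10
        rw [hc, show 2 * k * (2 * c) = 4 * (k * c) by ring]
        omega
      · exact dvd_add h01 ((dvd_mul_right 2 k).mul_right _)
    · exact of_mul (hSk k) (coe_S_mul_T_sq_zpow_mul_S_inv_mul k M) h00 h01
        (dvd_sub h10 ((dvd_mul_right 2 k).mul_right _)) hlt

instance finiteIndex_range_sanovHom : sanovHom.range.FiniteIndex := by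
  have hgen (i : Fin 2) : ![1, S] i * T ^ 2 * (![1, S] i)⁻¹ ∈ sanovHom.range :=
    ⟨.of i, by simp [sanovHom]⟩
  have hGamma : CongruenceSubgroup.Gamma 4 ≤ sanovHom.range := by
    intro M hM
    obtain ⟨h00, h01, h10, -⟩ := CongruenceSubgroup.Gamma_mem.1 hM
    rw [ZMod.intCast_zmod_eq_zero_iff_dvd] at h01 h10
    have h00 : M 0 0 % 4 = 1 := (ZMod.intCast_eq_intCast_iff' _ 1 4).1 (by rwa [Int.cast_one])
    exact mem_of_T_sq_mem (by simpa using hgen 0) (by simpa using hgen 1) h00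
      (dvd_trans (by norm_num) h01) (dvd_trans (by norm_num) h10)
  exact Subgroup.finiteIndex_of_le hGamma

instance finiteIndex_range_toGL : (toGL : SL(2, ℤ) →* GL (Fin 2) ℤ).range.FiniteIndex := by
  have h : toGL.range = (Matrix.GeneralLinearGroup.det (n := Fin 2) (R := ℤ)).ker :=
    SetLike.coe_injective range_toGL
  rw [h]
  infer_instance

end Sanov

theorem cf_eq_F2_eq_SL2Z_eq_GL2Z_general {α : Type*} (L : Language α) :
    (L.IsContextFree ↔ GRecognizable (FreeGroup (Fin 2)) L) ∧
    (GRecognizable (FreeGroup (Fin 2)) L ↔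
      GRecognizable (Matrix.SpecialLinearGroup (Fin 2) ℤ) L) ∧
    (GRecognizable (Matrix.SpecialLinearGroup (Fin 2) ℤ) L ↔
      GRecognizable (GL (Fin 2) ℤ) L) :=
  ⟨isContextFree_iff_gRecognizable_freeGroup,
    (gRecognizable_iff_of_finiteIndex sanovHom_injective).symm,
    (gRecognizable_iff_of_finiteIndex Matrix.SpecialLinearGroup.toGL_injective).symm⟩

/-- `CF = 𝔏(F₂) = 𝔏(SL(2,ℤ)) = 𝔏(GL(2,ℤ))`. -/
theorem cf_eq_F2_eq_SL2Z_eq_GL2Z {α : Type} [Fintype α] (L : Language α) :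
    (L.IsContextFree ↔ GRecognizable (FreeGroup (Fin 2)) L) ∧
    (GRecognizable (FreeGroup (Fin 2)) L ↔
      GRecognizable (Matrix.SpecialLinearGroup (Fin 2) ℤ) L) ∧
    (GRecognizable (Matrix.SpecialLinearGroup (Fin 2) ℤ) L ↔
      GRecognizable (GL (Fin 2) ℤ) L) :=
  cf_eq_F2_eq_SL2Z_eq_GL2Z_general L
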